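/- Let v be a vertex that has all iterated bases defined (i.e., base^k(v) is an unmatched vertex for some k) and let p be an evenlevel(v) or oddlevel(v) path. Then for each vertex u lying on p, all iterated bases of u lie on p. -/

import Mathlib

attribute [local instance] Classical.propDecidable

variable {V : Type*} [DecidableEq V]

namespace MV

/-- A walk is alternating (w.r.t. matching `M`) in the sense used for alternating paths
starting at an unmatched vertex: the `i`-th edge is matched iff `i` is odd. -/
def IsAlt (G : SimpleGraph V) (M : G.Subgraph) {a b : V} (w : G.Walk a b) : Prop :=
  ∀ i (h : i < w.edges.length), (w.edges.get ⟨i, h⟩ ∈ M.edgeSet ↔ Odd i)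

/-- length of a minimum even alternating path from an unmatched vertex to `v`. -/
noncomputable def evenlevel (G : SimpleGraph V) (M : G.Subgraph) (v : V) : ℕ∞ :=
  sInf {n : ℕ∞ | ∃ (f : V) (w : G.Walk f v),
    f ∉ M.verts ∧ w.IsPath ∧ IsAlt G M w ∧ Even w.length ∧ n = (w.length : ℕ∞)}

/-- length of a minimum odd alternating path from an unmatched vertex to `v`. -/
noncomputable def oddlevel (G : SimpleGraph V) (M : G.Subgraph) (v : V) : ℕ∞ :=
  sInf {n : ℕ∞ | ∃ (f : V) (w : G.Walk f v),
    f ∉ M.verts ∧ w.IsPath ∧ IsAlt G M w ∧ Odd w.length ∧ n = (w.length : ℕ∞)}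

noncomputable def tenacity (G : SimpleGraph V) (M : G.Subgraph) (v : V) : ℕ∞ :=
  evenlevel G M v + oddlevel G M v

noncomputable def minlevel (G : SimpleGraph V) (M : G.Subgraph) (v : V) : ℕ∞ :=
  min (evenlevel G M v) (oddlevel G M v)

noncomputable def maxlevel (G : SimpleGraph V) (M : G.Subgraph) (v : V) : ℕ∞ :=
  max (evenlevel G M v) (oddlevel G M v)

/-- the length of a minimum length augmenting path w.r.t. `M` (`⊤` if none exists). -/
noncomputable def lm (G : SimpleGraph V) (M : G.Subgraph) : ℕ∞ :=
  sInf {n : ℕ∞ | ∃ (f g : V) (w : G.Walk f g), f ∉ M.verts ∧ g ∉ M.verts ∧ f ≠ g ∧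
    w.IsPath ∧ IsAlt G M w ∧ Odd w.length ∧ n = (w.length : ℕ∞)}

/-- `w` is a minimum even- or odd-length alternating path from an unmatched vertex to `v`
  (an `evenlevel(v)` or `oddlevel(v)` path). -/
def IsMinPathTo (G : SimpleGraph V) (M : G.Subgraph) (v f : V) (w : G.Walk f v) : Prop :=
  f ∉ M.verts ∧ w.IsPath ∧ IsAlt G M w ∧
    ((Even w.length ∧ (w.length : ℕ∞) = evenlevel G M v) ∨
     (Odd w.length ∧ (w.length : ℕ∞) = oddlevel G M v))

/-- `b` is the vertex of tenacity greater than `tenacity v` on `w` furthest from the start. -/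
def IsFurthestHigh (G : SimpleGraph V) (M : G.Subgraph) (v : V) {f v' : V}
    (w : G.Walk f v') (b : V) : Prop :=
  ∃ hb : b ∈ w.support, tenacity G M v < tenacity G M b ∧
    ∀ u, ∀ hu : u ∈ w.support, tenacity G M v < tenacity G M u →
      (w.takeUntil u hu).length ≤ (w.takeUntil b hb).length

/-- `b` is the base of `v`: the furthest higher-tenacity vertex on every minimum
even or odd alternating path to `v`. -/
def IsBase (G : SimpleGraph V) (M : G.Subgraph) (v b : V) : Prop :=
  ∀ (f : V) (w : G.Walk f v), IsMinPathTo G M v f w → IsFurthestHigh G M v w b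

/-- minimum even length alternating path from `b` to `v` starting with an unmatched edge
  (`evenlevel(b; v)`). -/
noncomputable def evenlevelFrom (G : SimpleGraph V) (M : G.Subgraph) (b v : V) : ℕ∞ :=
  sInf {n : ℕ∞ | ∃ w : G.Walk b v,
    w.IsPath ∧ IsAlt G M w ∧ Even w.length ∧ n = (w.length : ℕ∞)}

/-- minimum odd length alternating path from `b` to `v` starting with an unmatched edge
  (`oddlevel(b; v)`). -/
noncomputable def oddlevelFrom (G : SimpleGraph V) (M : G.Subgraph) (b v : V) : ℕ∞ :=
  sInf {n : ℕ∞ | ∃ w : G.Walk b v,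
    w.IsPath ∧ IsAlt G M w ∧ Odd w.length ∧ n = (w.length : ℕ∞)}

def Outer (G : SimpleGraph V) (M : G.Subgraph) (v : V) : Prop :=
  evenlevel G M v < oddlevel G M v

/-- The blossom `B_{b,t}`, defined recursively, relative to a base function `bse`. -/
noncomputable def blossom (G : SimpleGraph V) (M : G.Subgraph) (bse : V → V) :
    ℕ → V → Set V
  | 0, _ => ∅
  | 1, _ => ∅
  | (t + 2), b =>
      {v | tenacity G M v = ((t + 2 : ℕ) : ℕ∞) ∧ bse v = b} ∪
      ⋃ v ∈ {u | (u = b ∨ (tenacity G M u = ((t + 2 : ℕ) : ℕ∞) ∧ bse u = b)) ∧ Outer G M u},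
        blossom G M bse t v

/-- The nesting depth `N(B_{b,t})`. -/
noncomputable def nestDepth (G : SimpleGraph V) (M : G.Subgraph) (bse : V → V) :
    ℕ → V → ℕ
  | 0, _ => 0
  | 1, _ => 0
  | (t + 2), b =>
      if {v | tenacity G M v = ((t + 2 : ℕ) : ℕ∞) ∧ bse v = b}.Nonempty then
        1 + sSup ((fun v => nestDepth G M bse t v) ''
          {u | (u = b ∨ (tenacity G M u = ((t + 2 : ℕ) : ℕ∞) ∧ bse u = b)) ∧ Outer G M u})
      else nestDepth G M bse t b

/-- `bse` assigns to each vertex of tenacity `< l_m` its (unique) base. -/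
def BaseFn (G : SimpleGraph V) (M : G.Subgraph) (bse : V → V) : Prop :=
  ∀ v, tenacity G M v < lm G M → IsBase G M v (bse v)

/-- `u` is a predecessor of `v`: `(u,v)` is the last edge of some `minlevel(v)` path. -/
def IsPred (G : SimpleGraph V) (M : G.Subgraph) (u v : V) : Prop :=
  ∃ (f : V) (w : G.Walk f v), f ∉ M.verts ∧ w.IsPath ∧ IsAlt G M w ∧
    (w.length : ℕ∞) = minlevel G M v ∧
    0 < w.length ∧ w.getVert (w.length - 1) = u

/-- A bridge is an edge of `G` that is not a prop. -/
def IsBridge (G : SimpleGraph V) (M : G.Subgraph) (u v : V) : Prop :=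
  G.Adj u v ∧ ¬ IsPred G M u v ∧ ¬ IsPred G M v u

/-- tenacity of an edge. -/
noncomputable def edgeTenacity (G : SimpleGraph V) (M : G.Subgraph) (u v : V) : ℕ∞ :=
  if s(u, v) ∈ M.edgeSet then oddlevel G M u + oddlevel G M v + 1
  else evenlevel G M u + evenlevel G M v + 1

/-!
The base `b` of `v` cuts every minimum path to `v` into a minimum path to `b` and a low segment,
whose vertices have tenacity at most that of `v`. By induction along `v`, `base v`, `base² v`, …
it is enough that the base of each vertex of a low segment lies on the segment or is its end `b`.

For a threshold `T`, follow bases from `u` until the tenacity is at least `T`; all vertices of a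
segment that is low for `T` lead to the end of that segment. This goes by induction on `T`. If it
holds for `T`, then the two ends of an unmatched edge of tenacity less than `T` lead to the same
vertex: otherwise minimum even paths to the two ends can be combined into a path contradicting
minimality, unless each runs through the vertex reached from the other end, which a comparison of
even levels excludes. To pass from `s` to `s + 1`, a stretch of tenacity less than `s` between two
vertices of tenacity at least `s`, the first of tenacity `s`, contains an edge at which the vertices
reached for `s` change. That edge has tenacity `s`, so both pieces of the stretch are low segments
for `s` on minimum paths to its ends. The same cut shows that bases do not leave a low segment.
-/

section Lists

variable {α : Type*} {P : α → Prop}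

theorem exists_eq_append_cons_first {L : List α} (h : ∃ z ∈ L, P z) :
    ∃ A z B, L = A ++ z :: B ∧ P z ∧ ∀ a ∈ A, ¬ P a := by
  obtain ⟨z, hz⟩ := Option.isSome_iff_exists.1 <|
    (List.find?_isSome (p := fun x => decide (P x))).2 (by simpa using h)
  obtain ⟨hPz, A, B, hL, hA⟩ := List.find?_eq_some_iff_append.1 hz
  exact ⟨A, z, B, hL, by simpa using hPz, by simpa using hA⟩

theorem exists_eq_append_cons_last {L : List α} (h : ∃ z ∈ L, P z) :
    ∃ A z B, L = A ++ z :: B ∧ P z ∧ ∀ b ∈ B, ¬ P b := by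
  obtain ⟨A, z, B, hL, hz, hA⟩ := exists_eq_append_cons_first (L := L.reverse) (by simpa using h)
  exact ⟨B.reverse, z, A.reverse, by simpa using congrArg List.reverse hL, hz, by simpa using hA⟩

theorem append_cons_comparison {A A' B B' : List α} {b c : α} (h : A ++ b :: B = A' ++ c :: B')
    (hA' : ∀ a ∈ A', P a) (hb : ¬ P b) :
    (A = A' ∧ b = c ∧ B = B') ∨ ∃ C, A = A' ++ c :: C ∧ B' = C ++ b :: B := by
  rcases List.append_eq_append_iff.1 h with ⟨_ | ⟨a, C⟩, rfl, h⟩ | ⟨_ | ⟨a, C⟩, rfl, h⟩ <;> simp_all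

theorem append_cons_inj_of_forall {A A' B B' : List α} {b c : α}
    (h : A ++ b :: B = A' ++ c :: B') (hA : ∀ a ∈ A, P a) (hA' : ∀ a ∈ A', P a)
    (hb : ¬ P b) (hc : ¬ P c) : A = A' ∧ b = c ∧ B = B' := by
  rcases append_cons_comparison h hA' hb with h | ⟨C, rfl, -⟩
  · exact h
  · exact absurd (hA c (by simp)) hc

theorem length_eq_of_cons_eq_append_cons {x b : α} {l A B : List α} (h : x :: l = A ++ b :: B) :
    l.length = A.length + B.length := by
  have := congrArg List.length h
  simp only [List.length_cons, List.length_append] at this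
  omega

theorem idxOf_reverse_lt [DecidableEq α] {A B : List α} {a b : α}
    (hn : (A ++ b :: B).Nodup) (ha : a ∈ A) :
    (A ++ b :: B).reverse.idxOf b < (A ++ b :: B).reverse.idxOf a := by
  have : a ∉ b :: B := by grind
  grind

end Lists

section AlternatingPaths

variable {α : Type*} {G : SimpleGraph α} {M : G.Subgraph} {K T : ℕ}

/-- `xy` may be the edge number `n`, counted from `0`, of an alternating path starting at an
unmatched vertex. -/
def AltEdge (M : G.Subgraph) (n : ℕ) (x y : α) : Prop :=
  G.Adj x y ∧ (M.Adj x y ↔ n % 2 = 1)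

theorem AltEdge.symm {n : ℕ} {x y : α} (h : AltEdge M n x y) : AltEdge M n y x :=
  ⟨h.1.symm, M.adj_comm y x |>.trans h.2⟩

theorem AltEdge.of_mod_eq {n m : ℕ} {x y : α} (h : AltEdge M n x y) (e : n % 2 = m % 2) :
    AltEdge M m x y :=
  ⟨h.1, e ▸ h.2⟩

/-- Alternating paths from an unmatched vertex, as vertex lists read backwards: the head is the
end of the path and the last entry is the unmatched vertex. -/
inductive AltPath (M : G.Subgraph) : List α → Prop
  | singleton {f : α} : f ∉ M.verts → AltPath M [f]
  | cons {x y : α} {l : List α} :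
      AltPath M (x :: l) → AltEdge M l.length x y → y ∉ x :: l → AltPath M (y :: x :: l)

namespace AltPath

theorem cons_cons_iff {x y : α} {l : List α} :
    AltPath M (y :: x :: l) ↔ AltPath M (x :: l) ∧ AltEdge M l.length x y ∧ y ∉ x :: l :=
  ⟨fun | cons h e hy => ⟨h, e, hy⟩, fun ⟨h, e, hy⟩ => cons h e hy⟩

theorem tail {x y : α} {l : List α} (h : AltPath M (y :: x :: l)) : AltPath M (x :: l) :=
  (cons_cons_iff.1 h).1

theorem altEdge {x y : α} {l : List α} (h : AltPath M (y :: x :: l)) : AltEdge M l.length x y :=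
  (cons_cons_iff.1 h).2.1

theorem notMem_verts {f : α} (h : AltPath M [f]) : f ∉ M.verts := by
  cases h with | singleton hf => exact hf

theorem nodup {l : List α} (h : AltPath M l) : l.Nodup := by
  induction h with
  | singleton => exact List.nodup_singleton _
  | cons _ _ hy ih => exact List.nodup_cons.2 ⟨hy, ih⟩

theorem notMem {y : α} {l : List α} (h : AltPath M (y :: l)) : y ∉ l :=
  (List.nodup_cons.1 h.nodup).1

theorem of_append {A B : List α} {u : α} (h : AltPath M (A ++ u :: B)) : AltPath M (u :: B) := by
  induction A with
  | nil => exact h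
  | cons a A ih => cases A <;> exact ih h.tail

theorem splice {A B C : List α} {z : α} (h : AltPath M (A ++ z :: B)) (hC : AltPath M (z :: C))
    (hBC : B.length % 2 = C.length % 2) (hAC : ∀ a ∈ A, a ∉ C) : AltPath M (A ++ z :: C) := by
  induction A with
  | nil => exact hC
  | cons a A ih =>
    have ha : a ∉ A ++ z :: B := h.notMem
    have haC : a ∉ A ++ z :: C := by grind
    cases A with
    | nil => exact cons hC (h.altEdge.of_mod_eq hBC) haC
    | cons a' A =>
      refine cons (ih h.tail fun x hx => hAC x (List.mem_cons_of_mem _ hx))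
        (h.altEdge.of_mod_eq ?_) haC
      simp only [List.append_eq, List.length_append, List.length_cons]
      omega

theorem reverse_append {B C D : List α} {z : α} (h : AltPath M (z :: D ++ B))
    (hC : AltPath M (z :: C)) (hDC : ∀ a ∈ D, a ∉ C)
    (hodd : D ≠ [] → (C.length + D.length + B.length) % 2 = 1) :
    AltPath M (D.reverse ++ z :: C) := by
  induction D generalizing z C with
  | nil => exact hC
  | cons k D ih =>
    have hz : z ∉ k :: (D ++ B) := h.notMem
    have hkC := hDC k List.mem_cons_self
    have hlen := hodd (List.cons_ne_nil _ _)
    simp only [List.length_cons] at hlen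
    have hcons : AltPath M (k :: z :: C) := by
      refine cons hC (h.altEdge.symm.of_mod_eq ?_) (by grind)
      simp only [List.append_eq, List.length_append]
      omega
    have := ih (z := k) (C := z :: C) h.tail hcons (by grind)
      fun _ => by simp only [List.length_cons]; omega
    simpa using this

end AltPath

/-! ### Capped levels and minimum paths -/

/-- The minimum length, among lengths of the parity of `i`, of an alternating path from an
unmatched vertex to `u`, replaced by `K` if it exceeds `K`. The cap makes it a natural number. -/
noncomputable def capLevel (M : G.Subgraph) (K i : ℕ) (u : α) : ℕ :=
  sInf {n | n = K ∨ (n % 2 = i % 2 ∧ ∃ l, AltPath M (u :: l) ∧ l.length = n)}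

/-- The tenacity computed from capped levels. It is the tenacity of `u` if it is less than `K`. -/
noncomputable def capTen (M : G.Subgraph) (K : ℕ) (u : α) : ℕ :=
  capLevel M K 0 u + capLevel M K 1 u

/-- `u :: l` is an alternating path to `u` whose length is minimum for its parity. -/
def MinPath (M : G.Subgraph) (K : ℕ) (u : α) (l : List α) : Prop :=
  AltPath M (u :: l) ∧ l.length = capLevel M K l.length u

theorem capLevel_congr {i j : ℕ} (h : i % 2 = j % 2) (u : α) :
    capLevel M K i u = capLevel M K j u := by
  rw [capLevel, capLevel, h]

theorem capLevel_le_cap (i : ℕ) (u : α) : capLevel M K i u ≤ K :=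
  Nat.sInf_le (Or.inl rfl)

theorem AltPath.capLevel_le {u : α} {l : List α} (h : AltPath M (u :: l)) {i : ℕ}
    (hi : l.length % 2 = i % 2) : capLevel M K i u ≤ l.length :=
  Nat.sInf_le (Or.inr ⟨hi, l, h, rfl⟩)

theorem AltPath.minPath {u : α} {l : List α} (h : AltPath M (u :: l)) {i : ℕ}
    (hi : l.length % 2 = i % 2) (hl : l.length ≤ capLevel M K i u) : MinPath M K u l :=
  ⟨h, by rw [capLevel_congr hi]; exact hl.antisymm (h.capLevel_le hi)⟩

theorem MinPath.capLevel_eq {u : α} {l : List α} (h : MinPath M K u l) {i : ℕ}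
    (hi : l.length % 2 = i % 2) : capLevel M K i u = l.length := by
  rw [h.2, capLevel_congr hi.symm]

theorem MinPath.le {u : α} {l l' : List α} (h : MinPath M K u l) (h' : AltPath M (u :: l'))
    (e : l.length % 2 = l'.length % 2) : l.length ≤ l'.length :=
  (h.capLevel_eq e).ge.trans (h'.capLevel_le rfl)

theorem exists_minPath_of_capLevel_lt {i : ℕ} {u : α} (h : capLevel M K i u < K) :
    ∃ l, MinPath M K u l ∧ l.length = capLevel M K i u ∧ l.length % 2 = i % 2 := by
  have hmem : capLevel M K i u ∈
      {n | n = K ∨ (n % 2 = i % 2 ∧ ∃ l, AltPath M (u :: l) ∧ l.length = n)} :=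
    Nat.sInf_mem ⟨K, Or.inl rfl⟩
  obtain hK | ⟨hi, l, hl, hlen⟩ := hmem
  · omega
  · rw [← hlen] at hi
    exact ⟨l, hl.minPath hi hlen.le, hlen, hi⟩

theorem capTen_eq_add (i : ℕ) (u : α) :
    capTen M K u = capLevel M K i u + capLevel M K (i + 1) u := by
  rcases Nat.mod_two_eq_zero_or_one i with h | h
  · rw [capTen, capLevel_congr (j := 0) h, capLevel_congr (i := i + 1) (j := 1) (by omega)]
  · rw [capTen, capLevel_congr (j := 1) h, capLevel_congr (i := i + 1) (j := 0) (by omega),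
      add_comm]

theorem exists_minPath_of_capTen_lt {u : α} (h : capTen M K u < K) (i : ℕ) :
    ∃ l, MinPath M K u l ∧ l.length = capLevel M K i u ∧ l.length % 2 = i % 2 :=
  exists_minPath_of_capLevel_lt (by rw [capTen_eq_add i] at h; omega)

theorem MinPath.capTen_eq {u : α} {l : List α} (h : MinPath M K u l) :
    capTen M K u = l.length + capLevel M K (l.length + 1) u := by
  rw [capTen_eq_add l.length, ← h.2]

theorem AltPath.eq_mate_cons (hM : M.IsMatching) {x y : α} {l : List α} (h : AltPath M (x :: l))
    (hl : l.length % 2 = 0) (m : M.Adj x y) : ∃ l', l = y :: l' := by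
  cases l with
  | nil => exact absurd (M.edge_vert m) h.notMem_verts
  | cons k l =>
    have hk : M.Adj k x := h.altEdge.2.2 (by simp only [List.length_cons] at hl; omega)
    exact ⟨l, by rw [hM.eq_of_adj_left m hk.symm]⟩

theorem AltPath.eq_append_mate (hM : M.IsMatching) {A B : List α} {x y : α}
    (h : AltPath M (A ++ x :: B)) (hA : A ≠ []) (hB : B.length % 2 = 1) (m : M.Adj x y) :
    ∃ A', A = A' ++ [y] := by
  obtain ⟨A', a, rfl⟩ := (List.eq_nil_or_concat' A).resolve_left hA
  rw [List.append_assoc] at h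
  exact ⟨A', by rw [hM.eq_of_adj_left m (h.of_append.altEdge.2.2 hB)]⟩

theorem AltPath.cons_mate (hM : M.IsMatching) {x y : α} {l : List α} (h : AltPath M (y :: l))
    (hl : l.length % 2 = 1) (m : M.Adj x y) : AltPath M (x :: y :: l) := by
  refine cons h ⟨m.adj_sub.symm, fun _ => hl, fun _ => m.symm⟩ fun hx => ?_
  obtain ⟨A, B, rfl⟩ := List.append_of_mem (List.mem_of_ne_of_mem m.ne hx)
  have hy : y ∉ A ++ x :: B := h.notMem
  rw [← List.cons_append] at h
  rcases Nat.mod_two_eq_zero_or_one B.length with hB | hB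
  · obtain ⟨B', rfl⟩ := h.of_append.eq_mate_cons hM hB m
    simp at hy
  · obtain ⟨A', hA'⟩ := h.eq_append_mate hM (List.cons_ne_nil _ _) hB m
    rcases List.cons_eq_append_iff.1 hA' with ⟨rfl, hA⟩ | ⟨A'', rfl, rfl⟩
    · obtain rfl : A = [] := (List.cons_inj_right y).1 hA.symm
      simp only [List.nil_append, List.length_cons] at hl
      omega
    · simp at hy

theorem capLevel_zero_eq_of_capLevel_one_lt (hM : M.IsMatching) {x y : α} (m : M.Adj x y)
    (h : capLevel M K 1 y < K) : capLevel M K 0 x = capLevel M K 1 y + 1 := by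
  obtain ⟨l, hl, hlen, hodd⟩ := exists_minPath_of_capLevel_lt h
  have hle := (hl.1.cons_mate hM hodd m).capLevel_le (K := K) (i := 0)
    (by simp only [List.length_cons]; omega)
  simp only [List.length_cons] at hle
  obtain hx | hx := (capLevel_le_cap (M := M) (K := K) 0 x).eq_or_lt
  · omega
  · obtain ⟨l', hl', hlen', heven⟩ := exists_minPath_of_capLevel_lt hx
    obtain ⟨l', rfl⟩ := hl'.1.eq_mate_cons hM heven m
    simp only [List.length_cons] at hlen' heven
    have := hl'.1.tail.capLevel_le (K := K) (i := 1) (by omega)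
    omega

theorem capLevel_zero_eq_of_lt (hM : M.IsMatching) {x y : α} (m : M.Adj x y)
    (h : capLevel M K 0 x < K) : capLevel M K 0 x = capLevel M K 1 y + 1 := by
  obtain ⟨l, hl, hlen, heven⟩ := exists_minPath_of_capLevel_lt h
  obtain ⟨l, rfl⟩ := hl.1.eq_mate_cons hM heven m
  simp only [List.length_cons] at hlen heven
  have := hl.1.tail.capLevel_le (i := 1) (K := K) (by omega)
  exact capLevel_zero_eq_of_capLevel_one_lt hM m (by omega)

theorem capLevel_eq_of_mate (hM : M.IsMatching) {x y : α} (m : M.Adj x y)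
    (h : capTen M K x < K) : capLevel M K 0 x = capLevel M K 1 y + 1 ∧
      capLevel M K 0 y = capLevel M K 1 x + 1 := by
  rw [capTen] at h
  exact ⟨capLevel_zero_eq_of_lt hM m (by omega),
    capLevel_zero_eq_of_capLevel_one_lt hM m.symm (by omega)⟩

theorem capTen_eq_of_mate (hM : M.IsMatching) {x y : α} (m : M.Adj x y)
    (h : capTen M K x < K) : capTen M K y = capTen M K x := by
  have := capLevel_eq_of_mate hM m h
  rw [capTen, capTen]
  omega

theorem AltPath.even_length_of_capTen (hM : M.IsMatching) (hT : T ≤ K) {a z : α} {B : List α}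
    (h : AltPath M (a :: z :: B))
    (hlow : (capTen M K a < T ∧ T ≤ capTen M K z) ∨ (capTen M K z < T ∧ T ≤ capTen M K a)) :
    B.length % 2 = 0 := by
  by_contra hodd
  have m : M.Adj z a := h.altEdge.2.2 (by omega)
  rcases hlow with hlow | hlow
  · have := capTen_eq_of_mate hM m.symm (hlow.1.trans_le hT); omega
  · have := capTen_eq_of_mate hM m (hlow.1.trans_le hT); omega

theorem MinPath.length_le_of_splice {v z : α} {l A B C : List α} (hl : MinPath M K v l)
    (e : v :: l = A ++ z :: B) (hC : AltPath M (z :: C)) (hBC : B.length % 2 = C.length % 2)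
    (hAC : ∀ a ∈ A, a ∉ C) : B.length ≤ C.length := by
  have h : AltPath M (A ++ z :: C) := (e ▸ hl.1).splice hC hBC hAC
  obtain ⟨l', hl'⟩ : ∃ l', v :: l' = A ++ z :: C := by
    rcases List.cons_eq_append_iff.1 e with ⟨rfl, e'⟩ | ⟨A', rfl, -⟩
    · exact ⟨C, by rw [(List.cons_eq_cons.1 e').1, List.nil_append]⟩
    · exact ⟨A' ++ z :: C, rfl⟩
  have hlen := length_eq_of_cons_eq_append_cons e
  have hlen' := length_eq_of_cons_eq_append_cons hl'
  have := hl.le (hl' ▸ h) (by omega)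
  omega

/-- Truncate `x :: w` where it first meets the final part `A ++ [u]` of `v :: l`: for one parity
this shortens `v :: l`, for the other it enters that part backwards and reaches `u` with the
opposite parity. -/
theorem MinPath.length_le_or_capLevel_le {v u x : α} {l A B w : List α} (hl : MinPath M K v l)
    (e : v :: l = A ++ u :: B) (hw : AltPath M (x :: w)) (hmeet : ∃ z ∈ x :: w, z ∈ A ++ [u]) :
    B.length ≤ w.length ∨ capLevel M K (B.length + 1) u ≤ A.length + w.length := by
  obtain ⟨W₁, z, W₂, eW, hz, hW₂⟩ := exists_eq_append_cons_last hmeet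
  obtain ⟨A₁, A₂, eA⟩ := List.append_of_mem hz
  have hzW : AltPath M (z :: W₂) := (eW ▸ hw).of_append
  have eL : v :: l = A₁ ++ z :: (A₂ ++ B) := by
    rw [e, List.append_cons, eA, List.append_assoc, List.cons_append]
  have hdisj : ∀ a ∈ A₁ ++ z :: A₂, a ∉ W₂ := fun a ha haW => hW₂ a haW (eA ▸ ha)
  have hlenW := length_eq_of_cons_eq_append_cons eW
  have hlenL := length_eq_of_cons_eq_append_cons eL
  have hlenA := congrArg List.length eA
  simp only [List.length_append, List.length_cons, List.length_nil] at hlenA hlenL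
  by_cases hpar : W₂.length % 2 = (A₂.length + B.length) % 2
  · have := hl.length_le_of_splice eL hzW (by rw [List.length_append, hpar])
      fun a ha => hdisj a (by simp [ha])
    rw [List.length_append] at this
    omega
  · have hback : AltPath M (A₂.reverse ++ z :: W₂) := (eL ▸ hl.1).of_append.reverse_append hzW
      (fun a ha => hdisj a (by simp [ha])) fun _ => by omega
    obtain ⟨Y, hY⟩ : ∃ Y, A₂.reverse ++ z :: W₂ = u :: Y := by
      have := congrArg List.reverse eA
      simp only [List.reverse_append, List.reverse_cons, List.append_assoc] at this
      rcases hA₂ : A₂.reverse with _ | ⟨a, A₃⟩ <;> simp_all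
    have hlenY := length_eq_of_cons_eq_append_cons hY.symm
    rw [List.length_reverse] at hlenY
    have := (hY ▸ hback).capLevel_le (K := K) (i := B.length + 1) (by omega)
    omega

theorem MinPath.of_append {v u : α} {l A B : List α} (hl : MinPath M K v l)
    (e : v :: l = A ++ u :: B) (hv : capTen M K v < K) (hvu : capTen M K v ≤ capTen M K u) :
    MinPath M K u B := by
  refine (e ▸ hl.1).of_append.minPath rfl ?_
  by_contra! hlt
  have hlen := length_eq_of_cons_eq_append_cons e
  have htv := hl.capTen_eq
  have htu := capTen_eq_add (M := M) (K := K) B.length u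
  obtain ⟨Q, hQ, hlenQ, -⟩ := exists_minPath_of_capLevel_lt (M := M) (K := K) (i := B.length)
    (u := u) (by omega)
  obtain ⟨R, hR, hlenR, -⟩ := exists_minPath_of_capTen_lt hv (l.length + 1)
  have hvA : v ∈ A ++ [u] := by cases A <;> simp_all
  have hQu := hl.length_le_or_capLevel_le e hQ.1 ⟨u, by simp, by simp⟩
  have hRu := hl.length_le_or_capLevel_le e hR.1 ⟨v, by simp, hvA⟩
  omega

/-! ### Low segments and bases -/

/-- `x :: l = A ++ b :: B` is a minimum path to `x` in which `b` is the entry of capped tenacity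
at least `T` that is furthest from the unmatched vertex. -/
structure LowSegment (M : G.Subgraph) (K T : ℕ) (x : α) (l A : List α) (b : α) (B : List α) :
    Prop where
  minPath : MinPath M K x l
  eq : x :: l = A ++ b :: B
  low : ∀ a ∈ A, capTen M K a < T
  high : T ≤ capTen M K b

/-- `b` is the common end of the low parts of all minimum paths to `u`, where "low" means capped
tenacity less than `T`. For `T = capTen M K u + 1` this is the base of `u`. -/
def BaseAt (M : G.Subgraph) (K T : ℕ) (u b : α) : Prop :=
  capTen M K u < T ∧ ∀ l, MinPath M K u l → ∃ A B, LowSegment M K T u l A b B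

/-- The map `u ↦ b` of `BaseAt`, extended by the identity to capped tenacity at least `T`. -/
def RootAt (M : G.Subgraph) (K T : ℕ) (u b : α) : Prop :=
  BaseAt M K T u b ∨ (T ≤ capTen M K u ∧ b = u)

/-- Every vertex of capped tenacity less than `K` has a base. -/
def HasBases (M : G.Subgraph) (K : ℕ) : Prop :=
  ∀ u, capTen M K u < K → ∃ b, BaseAt M K (capTen M K u + 1) u b

/-- Every augmenting path has length at least `K`. -/
def NoShortAugPath (M : G.Subgraph) (K : ℕ) : Prop :=
  ∀ f l, f ∉ M.verts → AltPath M (f :: l) → l.length % 2 = 1 → K ≤ l.length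

namespace LowSegment

variable {x b : α} {l A B : List α}

theorem altPath (h : LowSegment M K T x l A b B) : AltPath M (A ++ b :: B) :=
  h.eq ▸ h.minPath.1

theorem length_eq (h : LowSegment M K T x l A b B) : l.length = A.length + B.length :=
  length_eq_of_cons_eq_append_cons h.eq

theorem ne_nil (h : LowSegment M K T x l A b B) (hx : capTen M K x < T) : A ≠ [] := by
  rintro rfl
  have := h.high
  obtain ⟨rfl, -⟩ := List.cons_eq_cons.1 h.eq
  omega

theorem head_mem (h : LowSegment M K T x l A b B) (hA : A ≠ []) : x ∈ A := by
  have := h.eq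
  cases A <;> simp_all

theorem minPath_base (h : LowSegment M K T x l A b B) (hT : T ≤ K) (hx : capTen M K x < T) :
    MinPath M K b B :=
  h.minPath.of_append h.eq (hx.trans_le hT) (hx.le.trans h.high)

theorem even_length (h : LowSegment M K T x l A b B) (hM : M.IsMatching) (hT : T ≤ K)
    (hA : A ≠ []) : B.length % 2 = 0 := by
  obtain ⟨A', a, rfl⟩ := (List.eq_nil_or_concat' A).resolve_left hA
  have hp := h.altPath
  rw [List.append_assoc] at hp
  exact hp.of_append.even_length_of_capTen hM hT (Or.inl ⟨h.low a (by simp), h.high⟩)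

theorem base_unique (h : LowSegment M K T x l A b B) {A' B' : List α} {c : α}
    (h' : LowSegment M K T x l A' c B') : A = A' ∧ b = c ∧ B = B' :=
  append_cons_inj_of_forall (P := fun a => capTen M K a < T) (h.eq.symm.trans h'.eq) h.low h'.low
    h.high.not_gt h'.high.not_gt

end LowSegment

namespace BaseAt

variable {u b : α}

theorem exists_lowSegment (h : BaseAt M K T u b) (hT : T ≤ K) (i : ℕ) :
    ∃ l A B, LowSegment M K T u l A b B ∧ l.length = capLevel M K i u ∧ l.length % 2 = i % 2 := by
  obtain ⟨l, hl, hlen, hpar⟩ := exists_minPath_of_capTen_lt (h.1.trans_le hT) i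
  obtain ⟨A, B, hs⟩ := h.2 l hl
  exact ⟨l, A, B, hs, hlen, hpar⟩

theorem le_capTen (h : BaseAt M K T u b) (hT : T ≤ K) : T ≤ capTen M K b := by
  obtain ⟨l, A, B, hs, -⟩ := h.exists_lowSegment hT 0
  exact hs.high

theorem unique (h : BaseAt M K T u b) (hT : T ≤ K) {c : α} (h' : BaseAt M K T u c) : b = c := by
  obtain ⟨l, A, B, hs, -⟩ := h.exists_lowSegment hT 0
  obtain ⟨A', B', hs'⟩ := h'.2 l hs.minPath
  exact (hs.base_unique hs').2.1

theorem capLevel_zero_lt (h : BaseAt M K T u b) (hM : M.IsMatching) (hT : T ≤ K) {l : List α}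
    (hl : AltPath M (u :: l)) : capLevel M K 0 b < l.length := by
  obtain ⟨m, A, B, hs, hlen, hpar⟩ := h.exists_lowSegment hT l.length
  have hA := hs.ne_nil h.1
  have hb := (hs.minPath_base hT h.1).capLevel_eq (i := 0) (hs.even_length hM hT hA)
  have := hs.minPath.le hl hpar
  have := hs.length_eq
  have := List.length_pos_iff.2 hA
  omega

theorem of_mate (h : BaseAt M K T u b) (hM : M.IsMatching) (hT : T ≤ K) {y : α}
    (m : M.Adj u y) : BaseAt M K T y b := by
  have hten := capTen_eq_of_mate hM m (h.1.trans_le hT)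
  have hlev := capLevel_eq_of_mate hM m (h.1.trans_le hT)
  have hy : capTen M K y < T := hten ▸ h.1
  refine ⟨hy, fun l hl => ?_⟩
  rcases Nat.mod_two_eq_zero_or_one l.length with hpar | hpar
  · obtain ⟨l, rfl⟩ := hl.1.eq_mate_cons hM hpar m.symm
    have hlen := hl.capLevel_eq (i := 0) hpar
    simp only [List.length_cons] at hpar hlen
    obtain ⟨A, B, hs⟩ := h.2 l (hl.1.tail.minPath (i := 1) (by omega) (by omega))
    exact ⟨y :: A, B, hl, by rw [hs.eq, List.cons_append],
      List.forall_mem_cons.2 ⟨hy, hs.low⟩, hs.high⟩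
  · have hlen := hl.capLevel_eq (i := 1) hpar
    obtain ⟨A, B, hs⟩ := h.2 (y :: l) ((hl.1.cons_mate hM hpar m).minPath (i := 0)
      (by simp only [List.length_cons]; omega) (by simp only [List.length_cons]; omega))
    obtain ⟨a, A, rfl⟩ := List.exists_cons_of_ne_nil (hs.ne_nil h.1)
    exact ⟨A, B, hl, (List.cons_eq_cons.1 hs.eq).2, (List.forall_mem_cons.1 hs.low).2, hs.high⟩

theorem trans {T' : ℕ} (h : BaseAt M K T' u b) (hT : T ≤ K) (hTT : T' ≤ T) {c : α}
    (h' : RootAt M K T b c) : BaseAt M K T u c := by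
  refine ⟨h.1.trans_le hTT, fun l hl => ?_⟩
  obtain ⟨A, B, hs⟩ := h.2 l hl
  have hlow : ∀ a ∈ A, capTen M K a < T := fun a ha => (hs.low a ha).trans_le hTT
  obtain h' | ⟨hb, rfl⟩ := h'
  · obtain ⟨A', B', hs'⟩ := h'.2 B (hs.minPath_base (hTT.trans hT) h.1)
    exact ⟨A ++ A', B', hl, by rw [hs.eq, hs'.eq, List.append_assoc],
      List.forall_mem_append.2 ⟨hlow, hs'.low⟩, hs'.high⟩
  · exact ⟨A, B, hl, hs.eq, hlow, hb⟩

end BaseAt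

theorem HasBases.exists_baseAt (hB : HasBases M K) (hT : T ≤ K) {u : α} (hu : capTen M K u < T) :
    ∃ b, BaseAt M K T u b := by
  obtain ⟨b, hb⟩ := hB u (hu.trans_le hT)
  by_cases hbT : capTen M K b < T
  · obtain ⟨c, hc⟩ := hB.exists_baseAt hT hbT
    exact ⟨c, hb.trans hT hu (Or.inl hc)⟩
  · exact ⟨b, hb.trans hT hu (Or.inr ⟨not_lt.1 hbT, rfl⟩)⟩
termination_by T - capTen M K u
decreasing_by exact Nat.sub_lt_sub_left hu (hb.le_capTen (by omega))

theorem HasBases.exists_rootAt (hB : HasBases M K) (hT : T ≤ K) (u : α) :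
    ∃ b, RootAt M K T u b := by
  by_cases hu : capTen M K u < T
  · obtain ⟨b, hb⟩ := hB.exists_baseAt hT hu
    exact ⟨b, Or.inl hb⟩
  · exact ⟨u, Or.inr ⟨not_lt.1 hu, rfl⟩⟩

theorem RootAt.unique {u b c : α} (h : RootAt M K T u b) (hT : T ≤ K) (h' : RootAt M K T u c) :
    b = c := by
  rcases h with h | ⟨h, rfl⟩ <;> rcases h' with h' | ⟨h', rfl⟩
  · exact h.unique hT h'
  · exact absurd h.1 h'.not_gt
  · exact absurd h'.1 h.not_gt
  · rfl

/-! ### Unmatched edges of small tenacity -/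

/-- Every vertex of a low part has the end of that part as its base. -/
def SegmentsShareBase (M : G.Subgraph) (K T : ℕ) : Prop :=
  ∀ x l A b B, LowSegment M K T x l A b B → ∀ a ∈ A, BaseAt M K T a b

/-- The ends of an unmatched edge of tenacity less than `s` have the same `RootAt`. -/
def EdgesShareRoot (M : G.Subgraph) (K T s : ℕ) : Prop :=
  ∀ x x' b b', AltEdge M 0 x x' → capLevel M K 0 x + capLevel M K 0 x' + 1 < s →
    RootAt M K T x b → RootAt M K T x' b' → b = b'

/-- Reattaching `D` backwards to `g :: W` gives every vertex of `D` a second path, of the other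
parity, so that each edge along `D` is matched or has tenacity less than `s`. -/
theorem EdgesShareRoot.descend {s : ℕ} (hX : EdgesShareRoot M K T s) (hM : M.IsMatching)
    (hT : T ≤ K) (hB : HasBases M K) {g c : α} {W D B : List α} (h : AltPath M (g :: (D ++ B)))
    (hW : AltPath M (g :: W)) (hDW : ∀ a ∈ D, a ∉ W)
    (hodd : (W.length + D.length + B.length) % 2 = 1) (hs : W.length + D.length + B.length < s)
    (hg : BaseAt M K T g c) :
    (∃ D₁ D₂, D = D₁ ++ c :: D₂ ∧ ∀ k ∈ D₁, BaseAt M K T k c) ∨ ∀ k ∈ D, BaseAt M K T k c := by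
  induction D generalizing g W with
  | nil => exact Or.inr (by simp)
  | cons k D ih =>
    have hgD : g ∉ k :: (D ++ B) := h.notMem
    have hedge : AltEdge M (D ++ B).length k g := h.altEdge
    simp only [List.length_cons] at hodd hs
    have hk : RootAt M K T k c := by
      by_cases hpar : (D ++ B).length % 2 = 1
      · exact Or.inl (hg.of_mate hM hT (hedge.2.2 hpar).symm)
      · rw [List.length_append] at hpar
        obtain ⟨c', hc'⟩ := hB.exists_rootAt hT k
        have hg0 := hW.capLevel_le (K := K) (i := 0) (by omega)
        have hk0 : capLevel M K 0 k ≤ (D ++ B).length :=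
          h.tail.capLevel_le (by simp only [List.append_eq, List.length_append]; omega)
        rw [List.length_append] at hk0
        obtain rfl := hX k g c' c (hedge.of_mod_eq (by rw [List.length_append]; omega)) (by omega)
          hc' (Or.inl hg)
        exact hc'
    obtain hk | ⟨-, rfl⟩ := hk
    · have hkW : AltPath M (k :: g :: W) := by
        refine .cons hW (hedge.symm.of_mod_eq (by rw [List.length_append]; omega)) ?_
        have := hDW k List.mem_cons_self
        grind
      rcases ih h.tail hkW (by grind) (by simp only [List.length_cons]; omega)
        (by simp only [List.length_cons]; omega) hk with ⟨D₁, D₂, rfl, hD₁⟩ | hD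
      · exact Or.inl ⟨k :: D₁, D₂, rfl, List.forall_mem_cons.2 ⟨hk, hD₁⟩⟩
      · exact Or.inr (List.forall_mem_cons.2 ⟨hk, hD⟩)
    · exact Or.inl ⟨[], D, rfl, by simp⟩

theorem AltPath.even_length_of_lt_capTen {x : α} {l : List α} (h : AltPath M (x :: l))
    (hlt : capLevel M K 0 x + l.length < capTen M K x) : l.length % 2 = 0 := by
  by_contra hodd
  have := h.capLevel_le (K := K) (i := 1) (by omega)
  rw [capTen] at hlt
  omega

theorem AltEdge.mem_of_lt_capTen {x y : α} {l : List α} (he : AltEdge M 0 x y) (hne : x ≠ y)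
    (hl : AltPath M (y :: l)) (heven : l.length % 2 = 0)
    (hlt : capLevel M K 0 x + l.length + 1 < capTen M K x) : x ∈ l := by
  by_contra hxl
  have hx : AltPath M (x :: y :: l) :=
    .cons hl (he.symm.of_mod_eq heven.symm) (by simp [hne, hxl])
  have := hx.even_length_of_lt_capTen (by simp only [List.length_cons]; omega)
  simp only [List.length_cons] at this
  omega

theorem AltEdge.capLevel_zero_lt {x y : α} (he : AltEdge M 0 x y) (hne : x ≠ y) (hT : T ≤ K)
    (hx : T ≤ capTen M K x) (hlt : capLevel M K 0 x + capLevel M K 0 y + 1 < T) :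
    capLevel M K 0 x < capLevel M K 0 y := by
  obtain ⟨Q, hQ, hlen, heven⟩ := exists_minPath_of_capLevel_lt (M := M) (K := K) (i := 0) (u := y)
    (by omega)
  obtain ⟨Q₁, Q₂, rfl⟩ := List.append_of_mem
    (he.mem_of_lt_capTen (K := K) hne hQ.1 heven (by omega))
  have hQ₂ : AltPath M (x :: Q₂) := AltPath.of_append (A := y :: Q₁) hQ.1
  simp only [List.length_append, List.length_cons] at hlen
  have := hQ₂.capLevel_le (K := K) (i := 0) (hQ₂.even_length_of_lt_capTen (K := K) (by omega))
  omega

theorem AltEdge.eq_of_baseAt {x y b : α} (he : AltEdge M 0 x y) (hne : x ≠ y) (hM : M.IsMatching)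
    (hT : T ≤ K) (hx : T ≤ capTen M K x) (hlt : capLevel M K 0 x + capLevel M K 0 y + 1 < T)
    (hb : BaseAt M K T y b) : x = b := by
  obtain ⟨Q, A, B, hs, hlen, heven⟩ := hb.exists_lowSegment hT 0
  obtain ⟨Q₁, Q₂, rfl⟩ := List.append_of_mem
    (he.mem_of_lt_capTen (K := K) hne hs.minPath.1 heven (by omega))
  simp only [List.length_append, List.length_cons] at hlen
  have hy : y ∉ Q₁ ++ x :: Q₂ := hs.minPath.1.notMem
  have hQ₂ : AltPath M (x :: Q₂) := AltPath.of_append (A := y :: Q₁) hs.minPath.1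
  have hyx : AltPath M (y :: x :: Q₂) := by
    refine .cons hQ₂ (he.of_mod_eq ?_) (by grind)
    exact (hQ₂.even_length_of_lt_capTen (K := K) (by omega)).symm
  rcases append_cons_comparison (P := fun a => capTen M K a < T)
      ((List.cons_append ..).trans hs.eq) hs.low hx.not_gt with ⟨-, hxb, -⟩ | ⟨C, -, rfl⟩
  · exact hxb
  · have := hb.capLevel_zero_lt hM hT hyx
    have := (hs.minPath_base hT hb.1).capLevel_eq (i := 0) (hs.even_length hM hT (hs.ne_nil hb.1))
    simp only [List.length_append, List.length_cons] at *
    omega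

theorem LowSegment.capLevel_zero_lt_of_mem {x b c : α} {l A B : List α}
    (h : LowSegment M K T x l A b B) (hM : M.IsMatching) (hT : T ≤ K) (hx : capTen M K x < T)
    (hc : T ≤ capTen M K c) (hcl : c ∈ x :: l) (hcb : c ≠ b)
    (hlt : capLevel M K 0 c + l.length < T) : capLevel M K 0 c < capLevel M K 0 b := by
  obtain ⟨L, B₂, eL⟩ := List.append_of_mem hcl
  rcases append_cons_comparison (P := fun a => capTen M K a < T) (eL.symm.trans h.eq) h.low
      hc.not_gt with ⟨-, hcb', -⟩ | ⟨C, -, rfl⟩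
  · exact absurd hcb' hcb
  · have hp : AltPath M (c :: B₂) := (eL ▸ h.minPath.1).of_append
    have hlen := length_eq_of_cons_eq_append_cons eL
    have := hp.capLevel_le (K := K) (i := 0) (hp.even_length_of_lt_capTen (K := K) (by omega))
    rw [(h.minPath_base hT hx).capLevel_eq (h.even_length hM hT (h.ne_nil hx)), List.length_append,
      List.length_cons]
    omega

/-- Otherwise the low part of the path to `x`, reversed and attached to the path to `x'`, would be
a short odd path to `b`. -/
theorem LowSegment.exists_baseAt_mem {x x' b : α} {Q Q' A B : List α}
    (h : LowSegment M K T x Q A b B) (hM : M.IsMatching) (hT : T ≤ K)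
    (hD : SegmentsShareBase M K T) (hx : capTen M K x < T) (he : AltEdge M 0 x x')
    (hQ' : AltPath M (x' :: Q')) (heven : Q.length % 2 = 0) (heven' : Q'.length % 2 = 0)
    (hlt : Q.length + Q'.length + 1 < T) (hb : b ∉ x' :: Q') :
    ∃ z ∈ x' :: Q', BaseAt M K T z b := by
  by_contra! hbase
  have hA : ∀ a ∈ A, a ∉ x' :: Q' := fun a ha haQ => hbase a haQ (hD x Q A b B h a ha)
  have hA₀ := h.ne_nil hx
  have hB := h.even_length hM hT hA₀
  have hlev := (h.minPath_base hT hx).capLevel_eq (i := 0) hB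
  have hlen := h.length_eq
  have hhigh := h.high
  have hpath := h.altPath
  obtain ⟨x₁, A, rfl⟩ := List.exists_cons_of_ne_nil hA₀
  obtain ⟨rfl, -⟩ := List.cons_eq_cons.1 h.eq
  have hxx' : AltPath M (x :: x' :: Q') :=
    .cons hQ' (he.symm.of_mod_eq heven'.symm) (hA x List.mem_cons_self)
  have hrev : AltPath M ((A ++ [b]).reverse ++ x :: x' :: Q') := by
    refine AltPath.reverse_append (B := B) (by simpa using hpath) hxx' (by grind) fun _ => ?_
    simp only [List.length_cons, List.length_append, List.length_nil] at hlen ⊢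
    omega
  have := AltPath.capLevel_le (u := b) (l := A.reverse ++ x :: x' :: Q') (K := K) (i := 1)
    (by simpa using hrev)
    (by simp only [List.length_append, List.length_reverse, List.length_cons] at hlen ⊢; omega)
  simp only [List.length_append, List.length_reverse, List.length_cons] at this hlen
  rw [capTen] at hhigh
  omega

theorem AltPath.exists_first_baseAt {x b : α} {Q : List α} (h : AltPath M (x :: Q))
    (hM : M.IsMatching) (hT : T ≤ K) (hx : ¬ BaseAt M K T x b)
    (hex : ∃ z ∈ x :: Q, BaseAt M K T z b) :
    ∃ C₁ y C₂, x :: Q = C₁ ++ y :: C₂ ∧ BaseAt M K T y b ∧ (∀ c ∈ C₁, ¬ BaseAt M K T c b) ∧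
      C₂.length % 2 = 0 := by
  obtain ⟨C₁, y, C₂, e, hy, hC₁⟩ := exists_eq_append_cons_first hex
  refine ⟨C₁, y, C₂, e, hy, hC₁, ?_⟩
  obtain rfl | ⟨Z, a, rfl⟩ := List.eq_nil_or_concat' C₁
  · exact absurd ((List.cons_eq_cons.1 e).1 ▸ hy) hx
  · by_contra hodd
    have hp := e ▸ h
    rw [List.append_assoc] at hp
    exact hC₁ a (by simp) (hy.of_mate hM hT (hp.of_append.altEdge.2.2 (by omega)))

theorem BaseAt.capLevel_zero_lt_of_notMem {u b : α} {C : List α} (h : BaseAt M K T u b)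
    (hC : AltPath M (u :: C)) (heven : C.length % 2 = 0) (hb : b ∉ u :: C) :
    capLevel M K 0 u < C.length := by
  by_contra! hle
  obtain ⟨A, B, hs⟩ := h.2 C (hC.minPath heven hle)
  exact hb (by simp [hs.eq])

/-- A path `R` shorter than the part of `v :: l` below `y` must run into the part above it, and
does so at the wrong parity: it then arrives along an unmatched edge. -/
theorem MinPath.exists_detour {v y : α} {l C₁ C₂ R : List α} (hl : MinPath M K v l)
    (hM : M.IsMatching) (hF : NoShortAugPath M K) (e : v :: l = C₁ ++ y :: C₂)
    (hR : AltPath M (y :: R)) (hl₂ : l.length % 2 = 0) (hC₂ : C₂.length % 2 = 0)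
    (hR₂ : R.length % 2 = 0) (hlt : R.length < C₂.length) (hlK : l.length < K) :
    ∃ C₃ g C₄ W₁ W₂, C₁ = C₃ ++ g :: C₄ ∧ R = W₁ ++ g :: W₂ ∧ W₂.length % 2 = 1 ∧
      (C₄.length + C₂.length) % 2 = 1 ∧ ∀ a ∈ W₂, a ∉ C₁ := by
  have hmeet : ∃ z ∈ R, z ∈ C₁ := by
    by_contra! hdisj
    have := hl.length_le_of_splice e hR (by omega) fun a ha haR => hdisj a haR ha
    omega
  obtain ⟨W₁, g, W₂, rfl, hg, hW₂⟩ := exists_eq_append_cons_last hmeet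
  obtain ⟨C₃, C₄, rfl⟩ := List.append_of_mem hg
  have hgW : AltPath M (g :: W₂) := AltPath.of_append (A := y :: W₁) hR
  have el : v :: l = C₃ ++ g :: (C₄ ++ y :: C₂) := by rw [e, List.append_assoc, List.cons_append]
  have hC₃ : AltPath M (C₃ ++ g :: (C₄ ++ y :: C₂)) := el ▸ hl.1
  have hlen := length_eq_of_cons_eq_append_cons el
  have hpar : (C₄ ++ y :: C₂).length % 2 ≠ W₂.length % 2 := fun hpar => by
    have := hl.length_le_of_splice el hgW hpar fun a ha haW => hW₂ a haW (by simp [ha])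
    simp only [List.length_append, List.length_cons] at this hlt
    omega
  suffices hodd : W₂.length % 2 = 1 by
    refine ⟨C₃, g, C₄, W₁, W₂, rfl, rfl, hodd, ?_, hW₂⟩
    simp only [List.length_append, List.length_cons] at hpar
    omega
  by_contra heven
  rcases W₂ with _ | ⟨m, W₂⟩
  · have := hF g _ hgW.notMem_verts hC₃.of_append (by rw [List.length_nil] at hpar; omega)
    omega
  · simp only [List.length_cons] at heven hpar
    have hgm : M.Adj m g := hgW.altEdge.2.2 (by omega)
    have hC₃nil : C₃ ≠ [] := by
      rintro rfl
      rw [List.length_nil] at hlen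
      omega
    obtain ⟨Z, rfl⟩ := hC₃.eq_append_mate hM hC₃nil (by omega) hgm.symm
    exact hW₂ m List.mem_cons_self (by simp)

theorem EdgesShareRoot.exists_common_base {s : ℕ} (hX : EdgesShareRoot M K T s)
    (hM : M.IsMatching) (hT : T ≤ K) (hB : HasBases M K) (hsT : s ≤ T) {v g y : α}
    {l A C D W : List α} (hl : MinPath M K v l) (e : v :: l = A ++ g :: (D ++ y :: C))
    (hv : capTen M K v < T) (hy : capTen M K y < T) (hgW : AltPath M (g :: W))
    (hW : ∀ a ∈ D ++ [y], a ∉ W) (hWodd : W.length % 2 = 1) (hDC : (D.length + C.length) % 2 = 1)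
    (hWC : W.length ≤ C.length) (hlt : D.length + C.length + W.length + 1 < s) :
    ∃ c, BaseAt M K T g c ∧ BaseAt M K T y c := by
  have hgD : AltPath M (g :: ((D ++ [y]) ++ C)) := by
    simpa using (e ▸ hl.1).of_append
  have hg : capTen M K g < T := by
    have hlev := hgD.capLevel_le (K := K) (i := 0)
      (by simp only [List.length_append, List.length_cons, List.length_nil]; omega)
    have := hgW.capLevel_le (K := K) (i := 1) hWodd
    simp only [List.length_append, List.length_cons, List.length_nil] at hlev
    rw [capTen]
    omega
  obtain ⟨c, hc⟩ := hB.exists_baseAt hT hg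
  refine ⟨c, hc, ?_⟩
  have hlenD : (D ++ [y]).length = D.length + 1 := by simp
  rcases hX.descend hM hT hB hgD hgW hW (by omega) (by omega) hc with ⟨D₁, D₂, eD, hD₁⟩ | hD
  · have hcT := hc.le_capTen hT
    obtain rfl | ⟨D₃, a, rfl⟩ := List.eq_nil_or_concat' D₂
    · obtain ⟨-, hyc⟩ := List.append_inj' eD rfl
      obtain rfl : y = c := by simpa using hyc
      exact absurd hy hcT.not_gt
    · have eD' : D ++ [y] = (D₁ ++ c :: D₃) ++ [a] := by simpa using eD
      obtain ⟨rfl, -⟩ := List.append_inj' eD' rfl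
      have ec : v :: l = (A ++ g :: D₁) ++ c :: (D₃ ++ y :: C) := by simpa using e
      have hcmin := hl.of_append ec (hv.trans_le hT) (hv.le.trans hcT)
      obtain ⟨Z, a', ea'⟩ := (List.eq_nil_or_concat' (g :: D₁)).resolve_left (by simp)
      have hD₁' : ∀ k ∈ g :: D₁, BaseAt M K T k c := List.forall_mem_cons.2 ⟨hc, hD₁⟩
      have ha' : capTen M K a' < T := (hD₁' a' (ea' ▸ List.mem_concat_self)).1
      have ha'c : AltPath M (a' :: c :: (D₃ ++ y :: C)) :=
        AltPath.of_append (A := A ++ Z) (by simpa [ec, ea'] using hl.1)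
      have := hcmin.capLevel_eq (i := 0) (ha'c.even_length_of_capTen hM hT (Or.inl ⟨ha', hcT⟩))
      have := hc.capLevel_zero_lt hM hT hgW
      simp only [List.length_append, List.length_cons] at *
      omega
  · exact hD y (by simp)

theorem EdgesShareRoot.base_mem {s : ℕ} (hX : EdgesShareRoot M K T s) (hM : M.IsMatching)
    (hT : T ≤ K) (hB : HasBases M K) (hF : NoShortAugPath M K) (hD : SegmentsShareBase M K T)
    (hsT : s < T) {x x' b b' : α} {Q Q' A B : List α} (he : AltEdge M 0 x x')
    (hQ : LowSegment M K T x Q A b B) (hx : capTen M K x < T) (heven : Q.length % 2 = 0)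
    (hx' : BaseAt M K T x' b') (hQ' : MinPath M K x' Q') (heven' : Q'.length % 2 = 0)
    (hle : Q.length + Q'.length + 1 ≤ s) (hne : b ≠ b') : b ∈ x' :: Q' := by
  by_contra hb
  obtain ⟨C₁, y, C₂, eC, hy, hC₁, hC₂⟩ := hQ'.1.exists_first_baseAt hM hT
    (fun hx'b => hne (hx'b.unique hT hx'))
    (hQ.exists_baseAt_mem hM hT hD hx he hQ'.1 heven heven' (by omega) hb)
  have hbC : b ∉ C₁ ++ y :: C₂ := eC ▸ hb
  obtain ⟨R, D, E, hR, hRlen, hReven⟩ := hy.exists_lowSegment hT 0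
  have hRC := hy.capLevel_zero_lt_of_notMem (eC ▸ hQ'.1).of_append hC₂ (by grind)
  obtain ⟨C₃, g, C₄, W₁, W₂, rfl, rfl, hW₂, hC₄, hdisj⟩ :=
    hQ'.exists_detour hM hF eC hR.minPath.1 heven' hC₂ hReven (by omega) (by omega)
  have hgW : AltPath M (g :: W₂) := AltPath.of_append (A := y :: W₁) hR.minPath.1
  have hyW : y ∉ W₁ ++ g :: W₂ := hR.minPath.1.notMem
  have hg : ¬ BaseAt M K T g b := hC₁ g (by simp)
  have hlev := (hQ.minPath_base hT hx).capLevel_eq (i := 0)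
    (hQ.even_length hM hT (hQ.ne_nil hx))
  have hlev' := (hR.minPath_base hT hy.1).capLevel_eq (i := 0)
    (hR.even_length hM hT (hR.ne_nil hy.1))
  have hlenQ := hQ.length_eq
  have hlenQ' := length_eq_of_cons_eq_append_cons eC
  have hWE : W₂.length < E.length := by
    rcases append_cons_comparison ((List.cons_append ..).trans hR.eq)
        (hD y _ D b E hR) hg with ⟨-, rfl, -⟩ | ⟨C, -, rfl⟩
    · simp at hbC
    · simp only [List.length_append, List.length_cons]; omega
  simp only [List.length_append, List.length_cons] at hlenQ' hRlen
  obtain ⟨c, hgc, hyc⟩ := hX.exists_common_base hM hT hB hsT.le hQ' (by simpa using eC)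
    hx'.1 hy.1 hgW (by grind) hW₂ hC₄ (by omega) (by omega)
  exact hg (hyc.unique hT hy ▸ hgc)

theorem SegmentsShareBase.edgesShareRoot (hD : SegmentsShareBase M K T) (hM : M.IsMatching)
    (hT : T ≤ K) (hB : HasBases M K) (hF : NoShortAugPath M K) {s : ℕ} (hs : s ≤ T) :
    EdgesShareRoot M K T s := by
  induction s with
  | zero => exact fun x x' b b' _ h => absurd h (Nat.not_lt_zero _)
  | succ s ih =>
    intro x x' b b' he hlt hb hb'
    have hX := ih (by omega)
    by_cases hne : x = x'
    · subst hne; exact hb.unique hT hb'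
    rcases hb with hb | ⟨hx, rfl⟩ <;> rcases hb' with hb' | ⟨hx', rfl⟩
    · by_contra hbb'
      obtain ⟨Q, A, B, hQ, hlen, heven⟩ := hb.exists_lowSegment hT 0
      obtain ⟨Q', A', B', hQ', hlen', heven'⟩ := hb'.exists_lowSegment hT 0
      have hmem := hX.base_mem hM hT hB hF hD hs he hQ hb.1 heven hb' hQ'.minPath heven' (by omega)
        hbb'
      have hmem' := hX.base_mem hM hT hB hF hD hs he.symm hQ' hb'.1 heven' hb hQ.minPath heven
        (by omega) (Ne.symm hbb')
      have hltb := hb.capLevel_zero_lt hM hT hQ.minPath.1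
      have hltb' := hb'.capLevel_zero_lt hM hT hQ'.minPath.1
      have := hQ'.capLevel_zero_lt_of_mem hM hT hb'.1 (hb.le_capTen hT) hmem hbb' (by omega)
      have := hQ.capLevel_zero_lt_of_mem hM hT hb.1 (hb'.le_capTen hT) hmem' (Ne.symm hbb')
        (by omega)
      omega
    · exact (he.symm.eq_of_baseAt (Ne.symm hne) hM hT hx' (by omega) hb).symm
    · exact he.eq_of_baseAt hne hM hT hx (by omega) hb'
    · have := he.capLevel_zero_lt hne hT hx (by omega)
      have := he.symm.capLevel_zero_lt (Ne.symm hne) hT hx' (by omega)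
      omega

/-! ### Bases of the vertices of a low segment -/

theorem EdgesShareRoot.minPath {s : ℕ} (hX : EdgesShareRoot M K T s) {x x' b b' : α}
    {l l' : List α} (he : AltEdge M 0 x x') (hl : AltPath M (x :: l)) (hl' : AltPath M (x' :: l'))
    (heven : l.length % 2 = 0) (heven' : l'.length % 2 = 0)
    (hle : l.length + l'.length + 1 ≤ s) (hb : RootAt M K T x b) (hb' : RootAt M K T x' b')
    (hne : b ≠ b') : MinPath M K x l ∧ MinPath M K x' l' := by
  have hge : s ≤ capLevel M K 0 x + capLevel M K 0 x' + 1 := by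
    by_contra! hlt
    exact hne (hX x x' b b' he hlt hb hb')
  have := hl.capLevel_le (K := K) (i := 0) heven
  have := hl'.capLevel_le (K := K) (i := 0) heven'
  exact ⟨hl.minPath (i := 0) heven (by omega), hl'.minPath (i := 0) heven' (by omega)⟩

theorem exists_maximal_baseAt_prefix {D R : List α} {a b : α} (ha : T ≤ capTen M K a) :
    ∃ D₁ D₂ x r, D = D₁ ++ D₂ ∧ D₂ ++ a :: R = x :: r ∧ (∀ d ∈ D₁, BaseAt M K T d b) ∧
      ¬ BaseAt M K T x b := by
  have hab : ¬ BaseAt M K T a b := fun h => h.1.not_ge ha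
  obtain ⟨D₁, x, r, e, hx, hD₁⟩ := exists_eq_append_cons_first (P := (¬ BaseAt M K T · b))
    (L := D ++ a :: R) ⟨a, by simp, hab⟩
  simp only [not_not] at hD₁
  rcases append_cons_comparison e hD₁ hab with ⟨rfl, rfl, rfl⟩ | ⟨C, rfl, rfl⟩
  · exact ⟨D, [], a, R, by simp, rfl, hD₁, hx⟩
  · exact ⟨D₁, x :: C, x, _, rfl, rfl, hD₁, hx⟩

/-- The vertices of `D` have base `w`, so they avoid the minimum even path to `w`; reattaching `D`
backwards to that path closes the edge `x'x`, whose tenacity is that of `w`. -/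
theorem MinPath.exists_reattachment {w x : α} {D r : List α} (hl : MinPath M K w (D ++ x :: r))
    (hM : M.IsMatching) (hT : T ≤ K) (hodd : (D ++ x :: r).length % 2 = 1)
    (hwK : capTen M K w < K) (hw : T ≤ capTen M K w) (hD : ∀ d ∈ D, BaseAt M K T d w) :
    ∃ L x' l', x' :: l' = D.reverse ++ w :: L ∧ AltPath M (x' :: l') ∧ AltEdge M r.length x x' ∧
      l'.length % 2 = r.length % 2 ∧ l'.length + r.length + 1 = capTen M K w ∧
      RootAt M K T x' w ∧ (r.length % 2 = 1 → BaseAt M K T x' w) := by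
  obtain ⟨L, hL, hlenL, hLeven⟩ := exists_minPath_of_capTen_lt hwK 0
  have hlev := hl.capLevel_eq (i := 1) hodd
  have hpath : AltPath M (w :: D ++ x :: r) := hl.1
  have hDL : ∀ d ∈ D, d ∉ L := by
    intro d hd hdL
    obtain ⟨L₁, L₂, rfl⟩ := List.append_of_mem hdL
    have := (hD d hd).capLevel_zero_lt hM hT (AltPath.of_append (A := w :: L₁) hL.1)
    simp only [List.length_append, List.length_cons] at hlenL
    omega
  have hrev : AltPath M (D.reverse ++ w :: L) := by
    refine hpath.reverse_append hL.1 hDL fun _ => ?_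
    simp only [List.length_append, List.length_cons] at hodd ⊢
    omega
  simp only [List.length_append, List.length_cons] at hlev hodd
  rw [capTen]
  obtain rfl | ⟨Z, z, rfl⟩ := List.eq_nil_or_concat' D
  · simp only [List.length_nil] at hlev hodd
    exact ⟨L, w, L, rfl, hL.1, hpath.altEdge, by omega, by omega, Or.inr ⟨hw, rfl⟩,
      fun h => by omega⟩
  · have hz := hD z (by simp)
    have hzx : AltPath M (z :: x :: r) := AltPath.of_append (A := w :: Z) (by simpa using hpath)
    refine ⟨L, z, Z.reverse ++ w :: L, by simp, by simpa using hrev, hzx.altEdge, ?_, ?_,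
      Or.inl hz, fun _ => hz⟩ <;>
    · simp only [List.length_append, List.length_cons, List.length_reverse, List.length_nil] at *
      omega

/-- A low part `D` directly below `w` is cut by the edge `x'x` of tenacity `capTen M K w` at which
the bases change from `w` to another vertex: one piece lies on a minimum path to `x'` through `w`,
the other on a minimum path to `x` through `a`. -/
theorem EdgesShareRoot.exists_bridge {s : ℕ} (hX : EdgesShareRoot M K s s) (hM : M.IsMatching)
    (hs : s < K) (hB : HasBases M K) {w a : α} {D R : List α} (hl : MinPath M K w (D ++ a :: R))
    (hw : capTen M K w = s) (hD₀ : D ≠ []) (hD : ∀ d ∈ D, capTen M K d < s)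
    (ha : s ≤ capTen M K a) :
    ∃ D₁ D₂ L x' l' x r, D = D₁ ++ D₂ ∧ x' :: l' = D₁.reverse ++ w :: L ∧
      x :: r = D₂ ++ a :: R ∧ MinPath M K x' l' ∧ MinPath M K x r := by
  obtain ⟨D₁, D₂, x, r, rfl, ex, hD₁, hx⟩ :=
    exists_maximal_baseAt_prefix (M := M) (K := K) (D := D) (b := w) (R := R) ha
  have hodd : (D₁ ++ x :: r).length % 2 = 1 := by
    obtain ⟨d, D', hd⟩ := List.exists_cons_of_ne_nil hD₀
    have hpath := hl.1
    rw [← ex, ← List.append_assoc]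
    rw [hd] at hpath hD ⊢
    have := hpath.even_length_of_capTen hM hs.le (Or.inr ⟨hD d List.mem_cons_self, hw.ge⟩)
    simp only [List.cons_append, List.length_cons, List.append_eq] at this ⊢
    omega
  rw [List.append_assoc, ex] at hl
  obtain ⟨b, hb⟩ := hB.exists_rootAt hs.le x
  have hbw : b ≠ w := by
    rintro rfl
    exact hb.elim hx fun h => hl.1.notMem (by simp [h.2])
  obtain ⟨L, x', l', ex', hl', he, hpar, hlen, hx', hx'odd⟩ :=
    hl.exists_reattachment hM hs.le hodd (hw.trans_lt hs) hw.ge hD₁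
  have hr : r.length % 2 = 0 := by
    by_contra hr
    exact hx ((hx'odd (by omega)).of_mate hM hs.le (he.2.2 (by omega)).symm)
  have hxr : AltPath M (x :: r) := AltPath.of_append (A := w :: D₁) hl.1
  obtain ⟨hmin, hmin'⟩ :=
    hX.minPath (he.of_mod_eq hr) hxr hl' hr (by omega) (by omega) hb hx' hbw
  exact ⟨D₁, D₂, L, x', l', x, r, rfl, ex', ex.symm, hmin', hmin⟩

namespace LowSegment

variable {x b u : α} {l A B : List α}

theorem drop {A₁ A₂ : List α} (h : LowSegment M K T x l (A₁ ++ u :: A₂) b B)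
    (hx : capTen M K x < K) (hxu : capTen M K x ≤ capTen M K u) :
    LowSegment M K T u (A₂ ++ b :: B) (u :: A₂) b B where
  minPath := h.minPath.of_append (A := A₁) (by simpa using h.eq) hx hxu
  eq := rfl
  low := fun a ha => h.low a (List.mem_append_right _ ha)
  high := h.high

theorem exists_gap {s : ℕ} (h : LowSegment M K (s + 1) x l A b B) (hx : capTen M K x = s)
    (hu : u ∈ A) (hus : capTen M K u < s) :
    ∃ A₁ w D a R, x :: l = A₁ ++ w :: (D ++ a :: R) ∧ u ∈ D ∧ (∀ d ∈ D, capTen M K d < s) ∧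
      capTen M K w = s ∧ s ≤ capTen M K a ∧ w ∈ A ∧ (a ∈ A ∨ a = b) ∧ D ⊆ A := by
  obtain ⟨A₀, A₃, rfl⟩ := List.append_of_mem hu
  have hxA₀ : x ∈ A₀ := by
    have := h.eq
    cases A₀ <;> grind
  obtain ⟨A₁, w, D₁, rfl, hw, hD₁⟩ := exists_eq_append_cons_last (P := (s ≤ capTen M K ·))
    ⟨x, hxA₀, hx.ge⟩
  obtain ⟨D₂, a, R, e, ha, hD₂⟩ := exists_eq_append_cons_first (P := (s ≤ capTen M K ·))
    (L := A₃ ++ b :: B) ⟨b, by simp, (Nat.le_succ s).trans h.high⟩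
  simp only [not_le] at hD₁ hD₂
  have hb : ¬ capTen M K b < s := by have := h.high; omega
  refine ⟨A₁, w, D₁ ++ u :: D₂, a, R, ?_, by simp, ?_, ?_, ha, by simp, ?_, ?_⟩
  · rw [h.eq, List.append_assoc, List.cons_append, e]
    simp
  · grind
  · exact (Nat.lt_succ_iff.1 (h.low w (by simp))).antisymm hw
  all_goals rcases append_cons_comparison e hD₂ hb with ⟨rfl, rfl, -⟩ | ⟨C, rfl, -⟩ <;> grind

/-- Below a part of capped tenacity at most `s`, each vertex of smaller tenacity lies on a low part
for `s` that stays inside the given part. -/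
theorem exists_lowSegment_mem {s : ℕ} (h : LowSegment M K (s + 1) x l A b B) (hM : M.IsMatching)
    (hs : s < K) (hB : HasBases M K) (hX : EdgesShareRoot M K s s) (hx : capTen M K x = s)
    (hu : u ∈ A) (hus : capTen M K u < s) :
    ∃ y m A' c C, LowSegment M K s y m A' c C ∧ u ∈ A' ∧ (c ∈ A ∨ c = b) ∧ A' ⊆ A := by
  obtain ⟨A₁, w, D, a, R, e, huD, hD, hw, ha, hwA, haA, hDA⟩ := h.exists_gap hx hu hus
  have hmin := h.minPath.of_append e (hx.trans_lt hs) (hx.trans hw.symm).le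
  obtain ⟨D₁, D₂, L, x', l', z, r, rfl, ex', ez, hx', hz⟩ :=
    hX.exists_bridge hM hs hB hmin hw (List.ne_nil_of_mem huD) hD ha
  rcases List.mem_append.1 huD with huD | huD
  · exact ⟨x', l', D₁.reverse, w, L, ⟨hx', ex', by grind, hw.ge⟩, by grind, Or.inl hwA, by grind⟩
  · exact ⟨z, r, D₂, a, R, ⟨hz, ez, by grind, ha⟩, huD, haA, by grind⟩

theorem baseAt_of_capTen_eq {s : ℕ} (h : LowSegment M K (s + 1) x l A b B) (hM : M.IsMatching)
    (hs : s < K) (hB : HasBases M K) (hF : NoShortAugPath M K) (hD : SegmentsShareBase M K s)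
    (hx : capTen M K x = s) (hu : u ∈ A) : BaseAt M K (s + 1) u b := by
  have hmax : ∀ w ∈ A, capTen M K w = s → BaseAt M K (s + 1) w b := by
    intro w hw hws
    obtain ⟨A₁, A₂, rfl⟩ := List.append_of_mem hw
    obtain ⟨c, hc⟩ := hB.exists_baseAt (T := s + 1) hs (by omega : capTen M K w < s + 1)
    have hdrop := h.drop (hx.trans_lt hs) (hx.trans hws.symm).le
    obtain ⟨A', B', h'⟩ := hc.2 _ hdrop.minPath
    rwa [(hdrop.base_unique h').2.1]
  rcases (Nat.lt_succ_iff.1 (h.low u hu)).eq_or_lt with hus | hus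
  · exact hmax u hu hus
  · obtain ⟨y, m, A', c, C, h', huA', hc, -⟩ :=
      h.exists_lowSegment_mem hM hs hB (hD.edgesShareRoot hM hs.le hB hF le_rfl) hx hu hus
    refine (hD y m A' c C h' u huA').trans hs (Nat.le_succ s) ?_
    rcases hc with hcA | rfl
    · exact Or.inl (hmax c hcA ((Nat.lt_succ_iff.1 (h.low c hcA)).antisymm h'.high))
    · exact Or.inr ⟨h.high, rfl⟩

end LowSegment

theorem LowSegment.baseAt {x b u : α} {l A B : List α} (h : LowSegment M K T x l A b B)
    (hM : M.IsMatching) (hT : T ≤ K) (hB : HasBases M K) (hF : NoShortAugPath M K)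
    (hD : ∀ s < T, SegmentsShareBase M K s) (hu : u ∈ A) : BaseAt M K T u b := by
  have hxT : capTen M K x < T := h.low x (h.head_mem (List.ne_nil_of_mem hu))
  obtain ⟨c, hc⟩ := hB x (hxT.trans_le hT)
  obtain ⟨A', B', h'⟩ := hc.2 l h.minPath
  have hbase : ∀ a ∈ A', BaseAt M K (capTen M K x + 1) a c := fun a ha =>
    h'.baseAt_of_capTen_eq hM (hxT.trans_le hT) hB hF (hD _ hxT) rfl ha
  have hA'pos := List.length_pos_iff.2 (h'.ne_nil (Nat.lt_succ_self _))
  rcases append_cons_comparison (h.eq.symm.trans h'.eq) (fun a ha => (h'.low a ha).trans_le hxT)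
      h.high.not_gt with ⟨rfl, rfl, rfl⟩ | ⟨A₂, rfl, rfl⟩
  · exact (hbase u hu).trans hT hxT (Or.inr ⟨h.high, rfl⟩)
  · have h₂ := h.drop (hxT.trans_le hT) (Nat.le_of_succ_le h'.high)
    rcases List.mem_append.1 hu with hu | hu
    · exact (hbase u hu).trans hT hxT (Or.inl (baseAt h₂ hM hT hB hF hD List.mem_cons_self))
    · exact baseAt h₂ hM hT hB hF hD hu
termination_by A.length
decreasing_by all_goals subst_vars; simp only [List.length_append, List.length_cons]; omega

theorem HasBases.segmentsShareBase (hB : HasBases M K) (hM : M.IsMatching) (hF : NoShortAugPath M K)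
    (hT : T ≤ K) : SegmentsShareBase M K T := by
  induction T using Nat.strong_induction_on with
  | _ T ih =>
    exact fun x l A b B h a ha => h.baseAt hM hT hB hF (fun s hs => ih s hs (by omega)) ha

theorem LowSegment.base_mem {x b u c : α} {l A B : List α} {R : ℕ}
    (h : LowSegment M K R x l A b B) (hM : M.IsMatching) (hR : R ≤ K) (hB : HasBases M K)
    (hF : NoShortAugPath M K) (hu : u ∈ A) (hc : BaseAt M K T u c) (hTR : T ≤ R) :
    c ∈ A ∨ c = b := by
  have hxR : capTen M K x < R := h.low x (h.head_mem (List.ne_nil_of_mem hu))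
  obtain ⟨T', hT', hxT', hTT'⟩ : ∃ T' ≤ R, capTen M K x < T' ∧
      (T' = T ∨ (T ≤ capTen M K x ∧ T' = capTen M K x + 1)) := by
    rcases lt_or_ge (capTen M K x) T with hxT | hTx
    · exact ⟨T, hTR, hxT, Or.inl rfl⟩
    · exact ⟨_, hxR, Nat.lt_succ_self _, Or.inr ⟨hTx, rfl⟩⟩
  obtain ⟨d, hd⟩ := hB.exists_baseAt (hT'.trans hR) hxT'
  obtain ⟨A', B', h'⟩ := hd.2 l h.minPath
  have hmem : u ∈ A' → c ∈ A' ∨ c = d := fun hu' => by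
    rcases hTT' with rfl | ⟨hTx, rfl⟩
    · exact Or.inr (hc.unique (hT'.trans hR)
        (hB.segmentsShareBase hM hF (hT'.trans hR) x l A' d B' h' u hu'))
    · have hX := (hB.segmentsShareBase hM hF (hxR.le.trans hR)).edgesShareRoot hM
        (hxR.le.trans hR) hB hF le_rfl
      obtain ⟨y, m, A'', e, C, h'', hu'', he, hsub⟩ :=
        h'.exists_lowSegment_mem hM (hxR.trans_le hR) hB hX rfl hu' (hc.1.trans_le hTx)
      rcases base_mem h'' hM (hxR.le.trans hR) hB hF hu'' hc hTx with hcA'' | rfl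
      · exact Or.inl (hsub hcA'')
      · exact he
  have hA'pos := List.length_pos_iff.2 (h'.ne_nil hxT')
  rcases append_cons_comparison (h.eq.symm.trans h'.eq) (fun a ha => (h'.low a ha).trans_le hT')
      h.high.not_gt with ⟨rfl, rfl, -⟩ | ⟨A₂, rfl, rfl⟩
  · exact hmem hu
  · rcases List.mem_append.1 hu with hu | hu
    · rcases hmem hu with hcA' | rfl <;> simp_all
    · have h₂ := h.drop (hxR.trans_le hR) (hxT'.le.trans h'.high)
      rcases base_mem h₂ hM hR hB hF hu hc hTR with hcA₂ | hcb
      · exact Or.inl (List.mem_append_right _ hcA₂)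
      · exact Or.inr hcb
termination_by (R, A.length)
decreasing_by
  · exact Prod.Lex.left _ _ hxR
  · subst_vars
    refine Prod.Lex.right _ ?_
    simp only [List.length_append, List.length_cons]
    omega

theorem NoShortAugPath.base_mem (hF : NoShortAugPath M K) (hM : M.IsMatching) {bse : α → α}
    (hb : ∀ u, capTen M K u < K → BaseAt M K (capTen M K u + 1) u (bse u)) {k : ℕ} {v : α}
    {l : List α} (hk : ∀ i < k, capTen M K (bse^[i] v) < K) (hend : bse^[k] v ∉ M.verts)
    (hl : MinPath M K v l) (heven : k = 0 → l.length % 2 = 0) {u : α} (hu : u ∈ v :: l)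
    (hut : capTen M K u < K) : bse u ∈ v :: l := by
  induction k generalizing v l with
  | zero =>
    cases l with
    | nil =>
      obtain rfl := List.mem_singleton.1 hu
      obtain ⟨l', hl', hlen, hodd⟩ := exists_minPath_of_capTen_lt hut 1
      have := hF u l' hend hl'.1 hodd
      rw [capTen] at hut
      omega
    | cons y l =>
      have heven := heven rfl
      simp only [List.length_cons] at heven
      exact absurd (M.edge_vert (hl.1.altEdge.2.2 (by omega)).symm) hend
  | succ k ih =>
    have hB : HasBases M K := fun u hu => ⟨_, hb u hu⟩
    have hv : capTen M K v < K := hk 0 k.succ_pos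
    obtain ⟨A, B, h⟩ := (hb v hv).2 l hl
    have hvA := h.ne_nil (Nat.lt_succ_self _)
    rw [h.eq] at hu ⊢
    rcases List.mem_append.1 hu with hu | hu
    · rcases h.base_mem hM hv hB hF hu (hb u hut) (h.low u hu) with hmem | heq <;> simp_all
    · have hB' := h.minPath_base hv (Nat.lt_succ_self _)
      exact List.mem_append_right _ <| ih (fun i hi => hk (i + 1) (Nat.succ_lt_succ hi)) hend hB'
        (fun _ => h.even_length hM hv hvA) hu
end AlternatingPaths

/-! ### Walks -/

section Walks

variable {α : Type*} {G : SimpleGraph α} {M : G.Subgraph} {K : ℕ} {f v : α}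

/-- The common form of `evenlevel` and `oddlevel`: the minimum length, among lengths of the parity
of `i`, of an alternating path from an unmatched vertex to `v`. -/
noncomputable def level (G : SimpleGraph α) (M : G.Subgraph) (i : ℕ) (v : α) : ℕ∞ :=
  sInf {n : ℕ∞ | ∃ (f : α) (w : G.Walk f v),
    f ∉ M.verts ∧ w.IsPath ∧ IsAlt G M w ∧ w.length % 2 = i % 2 ∧ n = (w.length : ℕ∞)}

theorem level_of_even {i : ℕ} (hi : Even i) (v : α) : level G M i v = evenlevel G M v := by
  simp only [level, evenlevel, Nat.even_iff, Nat.even_iff.1 hi]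

theorem level_of_odd {i : ℕ} (hi : Odd i) (v : α) : level G M i v = oddlevel G M v := by
  simp only [level, oddlevel, Nat.odd_iff, Nat.odd_iff.1 hi]

theorem tenacity_eq_level_add_level (v : α) :
    tenacity G M v = level G M 0 v + level G M 1 v := by
  rw [level_of_even Even.zero, level_of_odd odd_one, tenacity]

theorem isMinPathTo_iff {w : G.Walk f v} : IsMinPathTo G M v f w ↔
    f ∉ M.verts ∧ w.IsPath ∧ IsAlt G M w ∧ (w.length : ℕ∞) = level G M w.length v := by
  rcases Nat.even_or_odd w.length with h | h
  · simp only [IsMinPathTo, level_of_even h, h, Nat.not_odd_iff_even.2 h, true_and, false_and,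
      or_false]
  · simp only [IsMinPathTo, level_of_odd h, h, Nat.not_even_iff_odd.2 h, true_and, false_and,
      false_or]

theorem isAlt_concat_iff {x : α} {w : G.Walk f v} {h : G.Adj v x} :
    IsAlt G M (w.concat h) ↔ IsAlt G M w ∧ (M.Adj v x ↔ w.length % 2 = 1) := by
  simp only [IsAlt, List.get_eq_getElem, SimpleGraph.Walk.edges_concat, List.concat_eq_append,
    List.length_append, List.length_singleton, SimpleGraph.Walk.length_edges, ← Nat.odd_iff]
  refine ⟨fun H => ⟨fun i hi => ?_, ?_⟩, fun ⟨H, hlast⟩ i hi => ?_⟩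
  · simpa [hi] using H i (by omega)
  · simpa using H w.length (by omega)
  · obtain hi | rfl := Nat.lt_succ_iff_lt_or_eq.1 hi
    · simpa [hi] using H i hi
    · simpa using hlast

theorem exists_altPath_of_walk {w : G.Walk f v} (hf : f ∉ M.verts) (hp : w.IsPath)
    (ha : IsAlt G M w) :
    ∃ l, w.support = (v :: l).reverse ∧ l.length = w.length ∧ AltPath M (v :: l) := by
  induction w using SimpleGraph.Walk.concatRec with
  | Hnil => exact ⟨[], rfl, rfl, .singleton hf⟩
  | Hconcat w h ih =>
    obtain ⟨hp, hx⟩ := SimpleGraph.Walk.concat_isPath_iff h |>.1 hp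
    obtain ⟨ha, hlast⟩ := isAlt_concat_iff.1 ha
    obtain ⟨l, hs, hlen, hl⟩ := ih hf hp ha
    rw [hs, List.mem_reverse] at hx
    refine ⟨_ :: l, ?_, ?_, hl.cons ⟨h, hlen ▸ hlast⟩ hx⟩
    · rw [SimpleGraph.Walk.support_concat, hs, ← List.reverse_cons]
    · rw [SimpleGraph.Walk.length_concat, List.length_cons, hlen]

theorem AltPath.exists_walk {l : List α} (h : AltPath M (v :: l)) :
    ∃ (f : α) (w : G.Walk f v), f ∉ M.verts ∧ w.IsPath ∧ IsAlt G M w ∧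
      w.support = (v :: l).reverse ∧ w.length = l.length := by
  induction l generalizing v with
  | nil => exact ⟨v, .nil, h.notMem_verts, .nil, fun i hi => absurd hi i.not_lt_zero, rfl, rfl⟩
  | cons x l ih =>
    obtain ⟨f, w, hf, hp, ha, hs, hlen⟩ := ih h.tail
    have hv : v ∉ w.support := by rw [hs, List.mem_reverse]; exact h.notMem
    refine ⟨f, w.concat h.altEdge.1, hf, hp.concat hv _,
      isAlt_concat_iff.2 ⟨ha, hlen ▸ h.altEdge.2⟩, ?_, ?_⟩
    · rw [SimpleGraph.Walk.support_concat, hs, ← List.reverse_cons]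
    · rw [SimpleGraph.Walk.length_concat, List.length_cons, hlen]

theorem natCast_capLevel (i : ℕ) (v : α) :
    (capLevel M K i v : ℕ∞) = min (K : ℕ∞) (level G M i v) := by
  apply le_antisymm
  · refine le_min (mod_cast capLevel_le_cap i v) (le_sInf ?_)
    rintro _ ⟨f, w, hf, hp, ha, hi, rfl⟩
    obtain ⟨l, -, hlen, hl⟩ := exists_altPath_of_walk hf hp ha
    exact mod_cast hlen ▸ hl.capLevel_le (hlen ▸ hi)
  · obtain hK | hK := (capLevel_le_cap (M := M) (K := K) i v).eq_or_lt
    · exact (min_le_left _ _).trans_eq (by rw [hK])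
    · obtain ⟨l, hl, hlen, hi⟩ := exists_minPath_of_capLevel_lt hK
      obtain ⟨f, w, hf, hp, ha, -, hw⟩ := hl.1.exists_walk
      exact min_le_of_right_le (sInf_le ⟨f, w, hf, hp, ha, hw ▸ hi, by rw [hw, hlen]⟩)

theorem natCast_capLevel_of_lt {i : ℕ} (h : capLevel M K i v < K) :
    (capLevel M K i v : ℕ∞) = level G M i v := by
  have hlt : (capLevel M K i v : ℕ∞) < K := mod_cast h
  rw [natCast_capLevel] at hlt ⊢
  exact min_eq_right ((min_lt_iff.1 hlt).resolve_left (lt_irrefl _)).le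

theorem natCast_capTen_le (v : α) : (capTen M K v : ℕ∞) ≤ tenacity G M v := by
  rw [capTen, Nat.cast_add, natCast_capLevel, natCast_capLevel, tenacity_eq_level_add_level]
  exact add_le_add (min_le_right _ _) (min_le_right _ _)

theorem natCast_capTen_of_lt (h : capTen M K v < K) : (capTen M K v : ℕ∞) = tenacity G M v := by
  rw [capTen] at h
  rw [capTen, Nat.cast_add, natCast_capLevel_of_lt (by omega), natCast_capLevel_of_lt (by omega),
    tenacity_eq_level_add_level]

theorem capTen_lt_of_tenacity_lt (h : tenacity G M v < K) : capTen M K v < K :=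
  mod_cast (natCast_capTen_le v).trans_lt h

theorem MinPath.exists_isMinPathTo {l : List α} (h : MinPath M K v l) (hv : capTen M K v < K) :
    ∃ (f : α) (w : G.Walk f v), IsMinPathTo G M v f w ∧ w.support = (v :: l).reverse := by
  obtain ⟨f, w, hf, hp, ha, hs, hlen⟩ := h.1.exists_walk
  refine ⟨f, w, isMinPathTo_iff.2 ⟨hf, hp, ha, ?_⟩, hs⟩
  rw [h.capTen_eq] at hv
  rw [hlen, ← natCast_capLevel_of_lt (K := K) (by rw [← h.2]; omega), ← h.2]

theorem IsMinPathTo.exists_minPath {w : G.Walk f v} (hw : IsMinPathTo G M v f w)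
    (hv : capTen M K v < K) : ∃ l, w.support = (v :: l).reverse ∧ MinPath M K v l := by
  obtain ⟨hf, hp, ha, hmin⟩ := isMinPathTo_iff.1 hw
  obtain ⟨l, hs, hlen, hl⟩ := exists_altPath_of_walk hf hp ha
  rw [capTen_eq_add w.length] at hv
  rw [← natCast_capLevel_of_lt (K := K) (by omega), Nat.cast_inj, ← hlen] at hmin
  exact ⟨l, hs, hl, hmin⟩

theorem noShortAugPath_of_le_lm (hK : (K : ℕ∞) ≤ lm G M) : NoShortAugPath M K := by
  intro f l hf hl hodd
  obtain ⟨g, w, hg, hp, ha, -, hlen⟩ := hl.exists_walk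
  have hgf : g ≠ f := by
    rintro rfl
    have := (SimpleGraph.Walk.isPath_iff_nil.1 hp).length_eq_zero
    omega
  have hlm : lm G M ≤ w.length :=
    sInf_le ⟨g, f, w, hg, hf, hgf, hp, ha, Nat.odd_iff.2 (hlen ▸ hodd), rfl⟩
  exact hlen ▸ Nat.cast_le.1 (hK.trans hlm)

theorem exists_natCast_le_forall_lt {ι : Type*} (s : Finset ι) {t : ι → ℕ∞} {L : ℕ∞}
    (h : ∀ i ∈ s, t i < L) : ∃ K : ℕ, (K : ℕ∞) ≤ L ∧ ∀ i ∈ s, t i < K := by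
  have htop : s.sup (fun i => t i + 1) < ⊤ :=
    (Finset.sup_lt_iff ENat.top_pos).2 fun i hi =>
      WithTop.add_lt_top.2 ⟨(h i hi).trans_le le_top, ENat.one_lt_top⟩
  obtain ⟨K, hK⟩ := ENat.ne_top_iff_exists.1 htop.ne
  refine ⟨K, hK ▸ Finset.sup_le fun i hi => Order.add_one_le_of_lt (h i hi), fun i hi => ?_⟩
  have hle : t i + 1 ≤ s.sup (fun i => t i + 1) := Finset.le_sup (f := fun i => t i + 1) hi
  rw [hK]
  exact (ENat.add_one_le_iff (h i hi).ne_top).1 hle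

end Walks

section Bases

variable {G : SimpleGraph V} {M : G.Subgraph} {K : ℕ} {f u v b : V}

theorem IsFurthestHigh.exists_lowSegment {w : G.Walk f u} {l : List V}
    (h : IsFurthestHigh G M u w b) (hl : MinPath M K u l) (hs : w.support = (u :: l).reverse)
    (hu : capTen M K u < K) : ∃ A B, LowSegment M K (capTen M K u + 1) u l A b B := by
  obtain ⟨hb, hhigh, hfurthest⟩ := h
  have hbl : b ∈ u :: l := by rwa [hs, List.mem_reverse] at hb
  obtain ⟨A, B, e⟩ := List.append_of_mem hbl
  rw [← natCast_capTen_of_lt hu] at hhigh hfurthest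
  refine ⟨A, B, hl, e, fun a ha => ?_, ?_⟩
  · by_contra! hlow
    have haw : a ∈ w.support := by simp [hs, e, ha]
    have hcap : (capTen M K u : ℕ∞) < capTen M K a := mod_cast hlow
    have hlen := hfurthest a haw (hcap.trans_le (natCast_capTen_le a))
    rw [SimpleGraph.Walk.length_takeUntil, SimpleGraph.Walk.length_takeUntil, hs, e] at hlen
    exact (idxOf_reverse_lt (e ▸ hl.1.nodup) ha).not_ge hlen
  · by_contra! hlow
    rw [← natCast_capTen_of_lt (K := K) (by omega), Nat.cast_lt] at hhigh
    omega

theorem IsBase.baseAt (h : IsBase G M u b) (hu : capTen M K u < K) :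
    BaseAt M K (capTen M K u + 1) u b := by
  refine ⟨Nat.lt_succ_self _, fun l hl => ?_⟩
  obtain ⟨f, w, hw, hs⟩ := hl.exists_isMinPathTo hu
  exact (h f w hw).exists_lowSegment hl hs hu

theorem IsMinPathTo.base_mem (hM : M.IsMatching) {bse : V → V} (hbse : BaseFn G M bse) {k : ℕ}
    (hk : 1 ≤ k) (hend : bse^[k] v ∉ M.verts)
    (hdef : ∀ i < k, tenacity G M (bse^[i] v) < lm G M) {w : G.Walk f v}
    (hw : IsMinPathTo G M v f w) (hu : u ∈ w.support) (hut : tenacity G M u < lm G M) :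
    bse u ∈ w.support := by
  obtain ⟨K, hK, hlt⟩ := exists_natCast_le_forall_lt (t := tenacity G M)
    (insert u ((Finset.range k).image fun i => bse^[i] v)) (L := lm G M) (by simpa [hut] using hdef)
  have hcap : ∀ i < k, capTen M K (bse^[i] v) < K := fun i hi =>
    capTen_lt_of_tenacity_lt (hlt _ (Finset.mem_insert_of_mem
      (Finset.mem_image_of_mem _ (Finset.mem_range.2 hi))))
  have hb : ∀ u, capTen M K u < K → BaseAt M K (capTen M K u + 1) u (bse u) := fun u hu =>
    (hbse u (natCast_capTen_of_lt hu ▸ (Nat.cast_lt.2 hu).trans_le hK)).baseAt hu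
  obtain ⟨l, hs, hl⟩ := hw.exists_minPath (hcap 0 hk)
  rw [hs, List.mem_reverse] at hu ⊢
  exact (noShortAugPath_of_le_lm hK).base_mem hM hb hcap hend hl (by omega) hu
    (capTen_lt_of_tenacity_lt (hlt u (Finset.mem_insert_self _ _)))

end Bases

/-- If `v` has all iterated bases defined and `p` is an `evenlevel(v)` or `oddlevel(v)`
path, then for every vertex `u` on `p`, all iterated bases of `u` lie on `p`. -/
theorem stmt14 (G : SimpleGraph V) (M : G.Subgraph) (hM : M.IsMatching)
    (bse : V → V) (hbse : BaseFn G M bse)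
    (v : V) (k : ℕ) (hk : 1 ≤ k) (hunm : bse^[k] v ∉ M.verts)
    (hdef : ∀ i, i < k → tenacity G M (bse^[i] v) < lm G M)
    (f : V) (w : G.Walk f v) (hw : IsMinPathTo G M v f w) :
    ∀ u ∈ w.support, ∀ j, 1 ≤ j →
      (∀ i, i < j → tenacity G M (bse^[i] u) < lm G M) →
      bse^[j] u ∈ w.support := by
  rintro u hu j - hj
  induction j with
  | zero => exact hu
  | succ j ih =>
    have hmem : bse^[j] u ∈ w.support := ih fun i hi => hj i (hi.trans j.lt_succ_self)
    rw [Function.iterate_succ_apply']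
    exact hw.base_mem hM hbse hk hunm hdef hmem (hj j j.lt_succ_self)

end MV
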